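/- Let φ be an FL^m1T-formula for m ≥ 2 (the m-variable fluted fragment with one distinguished transitive relation). If φ is satisfiable, then φ has a model of size at most (m+1)-tuply exponential in the size of φ; hence the satisfiability problem for FL^m1T is in nondeterministic (m+1)-tuply exponential time. In particular, the fluted fragment with one transitive relation, FL1T, has the finite model property. -/

import Mathlib

/- STATEMENT 11: FL^m1T has the (m+1)-tuply exponential-sized model property; in
particular FL1T has the finite model property (Theorem 6). -/
namespace FlutedOneTrans

/-- A fluted `m`-atom over the signature of predicates `Fin n` with arities `ar`,
together with the distinguished binary predicate `t`: either `p(x_{m-k+1},…,x_m)` for a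
predicate `p` of arity `k ≤ m`, or `t(x_{m-1},x_m)` (when `2 ≤ m`). -/
inductive FAtom (n : ℕ) (ar : Fin n → ℕ) (m : ℕ) : Type
  | pred (i : Fin n) (h : ar i ≤ m) : FAtom n ar m
  | tat (h : 2 ≤ m) : FAtom n ar m

/-- A structure interpreting the signature `(n, ar)` together with the distinguished
binary predicate `t`. -/
structure Str (n : ℕ) (ar : Fin n → ℕ) (A : Type) where
  R : ∀ i : Fin n, (Fin (ar i) → A) → Prop
  T : A → A → Prop

def FAtom.Sat {n : ℕ} {ar : Fin n → ℕ} {A : Type} (M : Str n ar A) {m : ℕ} :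
    FAtom n ar m → (Fin m → A) → Prop
  | .pred i h, v => M.R i (fun j => v ⟨m - ar i + j.val, by have := j.isLt; omega⟩)
  | .tat h, v => M.T (v ⟨m - 2, by omega⟩) (v ⟨m - 1, by omega⟩)

def FAtom.size {n : ℕ} {ar : Fin n → ℕ} {m : ℕ} : FAtom n ar m → ℕ
  | .pred i _ => ar i + 1
  | .tat _ => 3

/-- Fluted formulas over `(n, ar)` together with `t`; the index `m` records that the
free variables form a suffix of `x₁, …, x_m`, atoms ending at the last variable. -/
inductive FL (n : ℕ) (ar : Fin n → ℕ) : ℕ → Type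
  | atom {m : ℕ} (a : FAtom n ar m) : FL n ar m
  | fls {m : ℕ} : FL n ar m
  | not {m : ℕ} (φ : FL n ar m) : FL n ar m
  | and {m : ℕ} (φ ψ : FL n ar m) : FL n ar m
  | or {m : ℕ} (φ ψ : FL n ar m) : FL n ar m
  | ex {m : ℕ} (φ : FL n ar (m + 1)) : FL n ar m
  | all {m : ℕ} (φ : FL n ar (m + 1)) : FL n ar m

def FL.Sat {n : ℕ} {ar : Fin n → ℕ} {A : Type} (M : Str n ar A) :
    ∀ {m : ℕ}, FL n ar m → (Fin m → A) → Prop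
  | _, .atom a, v => FAtom.Sat M a v
  | _, .fls, _ => False
  | _, .not φ, v => ¬ FL.Sat M φ v
  | _, .and φ ψ, v => FL.Sat M φ v ∧ FL.Sat M ψ v
  | _, .or φ ψ, v => FL.Sat M φ v ∨ FL.Sat M ψ v
  | _, .ex φ, v => ∃ a : A, FL.Sat M φ (Fin.snoc v a)
  | _, .all φ, v => ∀ a : A, FL.Sat M φ (Fin.snoc v a)

def FL.size {n : ℕ} {ar : Fin n → ℕ} : ∀ {m : ℕ}, FL n ar m → ℕ
  | _, .atom a => a.size
  | _, .fls => 1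
  | _, .not φ => FL.size φ + 1
  | _, .and φ ψ => FL.size φ + FL.size ψ + 1
  | _, .or φ ψ => FL.size φ + FL.size ψ + 1
  | _, .ex φ => FL.size φ + 1
  | _, .all φ => FL.size φ + 1

/-- The largest variable index featured in a fluted formula: a sentence `φ : FL n ar 0`
belongs to the `m`-variable fluted fragment `FL^m1T` iff `FL.depth φ ≤ m`. -/
def FL.depth {n : ℕ} {ar : Fin n → ℕ} : ∀ {m : ℕ}, FL n ar m → ℕ
  | m, .atom _ => m
  | m, .fls => m
  | _, .not φ => FL.depth φ
  | _, .and φ ψ => max (FL.depth φ) (FL.depth ψ)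
  | _, .or φ ψ => max (FL.depth φ) (FL.depth ψ)
  | _, .ex φ => FL.depth φ
  | _, .all φ => FL.depth φ

/-- Satisfaction of a fluted sentence. -/
def SatSent {n : ℕ} {ar : Fin n → ℕ} {A : Type} (M : Str n ar A) (φ : FL n ar 0) : Prop :=
  FL.Sat M φ (fun i => i.elim0)

/-- `φ` is satisfiable in a structure interpreting `t` as a transitive relation. -/
def SatisfiableT {n : ℕ} {ar : Fin n → ℕ} (φ : FL n ar 0) : Prop :=
  ∃ (A : Type) (_ : Nonempty A) (M : Str n ar A), Transitive M.T ∧ SatSent M φ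

/-- A fluted `m`-literal. -/
abbrev Lit (n : ℕ) (ar : Fin n → ℕ) (m : ℕ) := Bool × FAtom n ar m

/-- A fluted `m`-clause: a disjunction of fluted `m`-literals. -/
abbrev Clause (n : ℕ) (ar : Fin n → ℕ) (m : ℕ) := List (Lit n ar m)

def Clause.Sat {n : ℕ} {ar : Fin n → ℕ} {A : Type} (M : Str n ar A) {m : ℕ}
    (c : Clause n ar m) (v : Fin m → A) : Prop :=
  ∃ l ∈ c, (if l.1 then FAtom.Sat M l.2 v else ¬ FAtom.Sat M l.2 v)

def Clause.size {n : ℕ} {ar : Fin n → ℕ} {m : ℕ} (c : Clause n ar m) : ℕ :=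
  (c.map fun l => FAtom.size l.2 + 1).sum + 1

/-- A formula of `FL^{k+1}1T` in clause normal form:
`∀x₁⋯x_{k+1}.Ω ∧ ⋀ᵢ ∀x₁⋯x_k(αᵢ → ∃x_{k+1}.Γᵢ) ∧ ⋀ⱼ ∀x₁⋯x_k(βⱼ → ∀x_{k+1}.Δⱼ)`,
where `Ω`, the `Γᵢ` and the `Δⱼ` are sets of fluted `(k+1)`-clauses and the `αᵢ`, `βⱼ`
are fluted `k`-atoms. -/
structure CNF (n : ℕ) (ar : Fin n → ℕ) (k : ℕ) where
  static : List (Clause n ar (k + 1))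
  exCon : List (FAtom n ar k × List (Clause n ar (k + 1)))
  allCon : List (FAtom n ar k × List (Clause n ar (k + 1)))

def CNF.Sat {n : ℕ} {ar : Fin n → ℕ} {k : ℕ} {A : Type} (M : Str n ar A)
    (φ : CNF n ar k) : Prop :=
  (∀ v : Fin (k + 1) → A, ∀ c ∈ φ.static, Clause.Sat M c v) ∧
  (∀ g ∈ φ.exCon, ∀ v : Fin k → A, FAtom.Sat M g.1 v →
    ∃ a : A, ∀ c ∈ g.2, Clause.Sat M c (Fin.snoc v a)) ∧
  (∀ g ∈ φ.allCon, ∀ v : Fin k → A, FAtom.Sat M g.1 v →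
    ∀ a : A, ∀ c ∈ g.2, Clause.Sat M c (Fin.snoc v a))

def CNF.size {n : ℕ} {ar : Fin n → ℕ} {k : ℕ} (φ : CNF n ar k) : ℕ :=
  (φ.static.map Clause.size).sum +
  (φ.exCon.map fun g => FAtom.size g.1 + (g.2.map Clause.size).sum + 1).sum +
  (φ.allCon.map fun g => FAtom.size g.1 + (g.2.map Clause.size).sum + 1).sum + 1

/-- `φ` (a clause-normal-form formula) is satisfiable with `t` transitive. -/
def CNF.SatisfiableT {n : ℕ} {ar : Fin n → ℕ} {k : ℕ} (φ : CNF n ar k) : Prop :=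
  ∃ (A : Type) (_ : Nonempty A) (M : Str n ar A), Transitive M.T ∧ CNF.Sat M φ

/-- Renaming of predicates along an arity-preserving signature inclusion. -/
def FAtom.lift {n n' : ℕ} {ar : Fin n → ℕ} {ar' : Fin n' → ℕ} (ι : Fin n → Fin n')
    (hι : ∀ i, ar' (ι i) = ar i) {m : ℕ} : FAtom n ar m → FAtom n' ar' m
  | .pred i h => .pred (ι i) (by rw [hι i]; exact h)
  | .tat h => .tat h

def FL.lift {n n' : ℕ} {ar : Fin n → ℕ} {ar' : Fin n' → ℕ} (ι : Fin n → Fin n')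
    (hι : ∀ i, ar' (ι i) = ar i) : ∀ {m : ℕ}, FL n ar m → FL n' ar' m
  | _, .atom a => .atom (FAtom.lift ι hι a)
  | _, .fls => .fls
  | _, .not φ => .not (FL.lift ι hι φ)
  | _, .and φ ψ => .and (FL.lift ι hι φ) (FL.lift ι hι ψ)
  | _, .or φ ψ => .or (FL.lift ι hι φ) (FL.lift ι hι ψ)
  | _, .ex φ => .ex (FL.lift ι hι φ)
  | _, .all φ => .all (FL.lift ι hι φ)


/-- The tower function: `tower k x` is the `k`-fold iterated exponential of `x`. -/
def tower : ℕ → ℕ → ℕ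
  | 0, x => x
  | k + 1, x => 2 ^ tower k x

/-- hereditary fluted types with `r` quantifiers to go -/
def Ty (n : ℕ) : ℕ → Type
  | 0 => Set (Option (Fin n))
  | r + 1 => Set (Option (Fin n)) × Set (Ty n r)

instance Ty.finite (n : ℕ) : ∀ r, Finite (Ty n r)
  | 0 => by unfold Ty; infer_instance
  | r + 1 => by
    have := Ty.finite n r
    unfold Ty; infer_instance

section
variable {n : ℕ} {ar : Fin n → ℕ} {A : Type}

def atoms (M : Str n ar A) {k : ℕ} (v : Fin k → A) : Set (Option (Fin n)) :=
  {o | (∃ i, o = some i ∧ ∃ h : ar i ≤ k, FAtom.Sat M (.pred i h) v) ∨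
    (o = none ∧ ∃ h : 2 ≤ k, FAtom.Sat M (.tat h) v)}

def ty (M : Str n ar A) : ∀ (r : ℕ) {k : ℕ}, (Fin k → A) → Ty n r
  | 0, _, v => atoms M v
  | r + 1, k, v => (atoms M v,
      Set.range fun b => ty M r (Fin.snoc v b : Fin (k + 1) → A))

theorem sat_of_atoms (M : Str n ar A) {k : ℕ} {u w : Fin k → A}
    (h : atoms M u = atoms M w) (a : FAtom n ar k) : FAtom.Sat M a u ↔ FAtom.Sat M a w := by
  cases a with
  | pred i hi =>
    have := Set.ext_iff.1 h (some i)
    simpa [atoms, hi] using this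
  | tat hi =>
    have := Set.ext_iff.1 h none
    simpa [atoms, hi] using this

theorem atoms_of_ty (M : Str n ar A) {r k : ℕ} {u w : Fin k → A}
    (h : ty M r u = ty M r w) : atoms M u = atoms M w := by
  cases r with
  | zero => exact h
  | succ r => exact congrArg Prod.fst h

theorem succ_of_ty (M : Str n ar A) {r k : ℕ} {u w : Fin k → A}
    (h : ty M (r + 1) u = ty M (r + 1) w) (b : A) :
    ∃ c, ty M r (Fin.snoc w c : Fin (k + 1) → A) = ty M r (Fin.snoc u b : Fin (k + 1) → A) := by
  have h2 : (Set.range fun b => ty M r (Fin.snoc u b : Fin (k + 1) → A)) =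
      Set.range fun b => ty M r (Fin.snoc w b : Fin (k + 1) → A) := congrArg Prod.snd h
  have : ty M r (Fin.snoc u b : Fin (k + 1) → A) ∈
    Set.range fun b => ty M r (Fin.snoc w b : Fin (k + 1) → A) := h2 ▸ ⟨b, rfl⟩
  exact this

theorem drop_ty (M : Str n ar A) : ∀ (r : ℕ) {k : ℕ} {u w : Fin k → A},
    ty M (r + 1) u = ty M (r + 1) w → ty M r u = ty M r w
  | 0, _, _, _, h => atoms_of_ty M h
  | r + 1, k, u, w, h => by
    refine Prod.ext (atoms_of_ty M h) ?_
    ext x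
    constructor
    · rintro ⟨b, rfl⟩
      obtain ⟨c, hc⟩ := succ_of_ty M h b
      exact ⟨c, drop_ty M r hc⟩
    · rintro ⟨b, rfl⟩
      obtain ⟨c, hc⟩ := succ_of_ty M h.symm b
      exact ⟨c, drop_ty M r hc⟩

theorem le_depth : ∀ {k : ℕ} (φ : FL n ar k), k ≤ FL.depth φ
  | _, .atom a => le_rfl
  | _, .fls => le_rfl
  | _, .not φ => le_depth φ
  | _, .and φ ψ => (le_depth φ).trans (le_max_left _ _)
  | _, .or φ ψ => (le_depth φ).trans (le_max_left _ _)
  | _, .ex φ => (Nat.le_succ _).trans (le_depth φ)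
  | _, .all φ => (Nat.le_succ _).trans (le_depth φ)

theorem sat_of_ty (M : Str n ar A) {k : ℕ} (φ : FL n ar k) : ∀ (r : ℕ) {u w : Fin k → A},
    FL.depth φ ≤ k + r → ty M r u = ty M r w → (FL.Sat M φ u ↔ FL.Sat M φ w) := by
  induction φ with
  | atom a => intro r u w _ h; exact sat_of_atoms M (atoms_of_ty M h) a
  | fls => intro r u w _ h; exact Iff.rfl
  | not φ ih => intro r u w hd h; exact not_congr (ih r hd h)
  | and φ ψ ih1 ih2 =>
    intro r u w hd h
    exact and_congr (ih1 r ((le_max_left _ _).trans hd) h) (ih2 r ((le_max_right _ _).trans hd) h)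
  | or φ ψ ih1 ih2 =>
    intro r u w hd h
    exact or_congr (ih1 r ((le_max_left _ _).trans hd) h) (ih2 r ((le_max_right _ _).trans hd) h)
  | @ex k φ ih =>
    intro r u w hd h
    have h1 : k + 1 ≤ FL.depth φ := le_depth φ
    simp only [FL.depth] at hd
    obtain _ | r := r
    · omega
    constructor
    · rintro ⟨b, hb⟩
      obtain ⟨c, hc⟩ := succ_of_ty M h b
      exact ⟨c, (ih r (by omega) hc).2 hb⟩
    · rintro ⟨b, hb⟩
      obtain ⟨c, hc⟩ := succ_of_ty M h.symm b
      exact ⟨c, (ih r (by omega) hc).2 hb⟩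
  | @all k φ ih =>
    intro r u w hd h
    have h1 : k + 1 ≤ FL.depth φ := le_depth φ
    simp only [FL.depth] at hd
    obtain _ | r := r
    · omega
    constructor
    · intro H b
      obtain ⟨c, hc⟩ := succ_of_ty M h.symm b
      exact (ih r (by omega) hc).1 (H c)
    · intro H b
      obtain ⟨c, hc⟩ := succ_of_ty M h b
      exact (ih r (by omega) hc).1 (H c)

end

/-! ### The two-variable core -/

section core
variable {A C : Type} (T : A → A → Prop) (l : A → C)

def Pos (a : A) : Set C := {c | ∃ b, T a b ∧ l b = c}
def Neg (a : A) : Set C := {c | ∃ b, ¬ T a b ∧ l b = c}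
def Inc (a : A) : Set C := {c | ∃ b, T b a ∧ l b = c}

def key (a : A) : C × Set C × Set C × Set C := (l a, Pos T l a, Neg T l a, Inc T l a)

def Edge (x y : Set.range (key T l) × Bool) : Prop :=
  (∃ a b, key T l a = x.1.1 ∧ key T l b = y.1.1 ∧ T a b) ∧ (x.2 = y.2 ∨ y.1.1.1 ∉ x.1.1.2.2.1)

theorem core_mono (hT : Transitive T) {x y : Set.range (key T l) × Bool}
    (h : Relation.TransGen (Edge T l) x y) :
    y.1.1.1 ∈ x.1.1.2.1 ∧ y.1.1.2.1 ⊆ x.1.1.2.1 ∧ x.1.1.2.2.1 ⊆ y.1.1.2.2.1 ∧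
    x.1.1.1 ∈ y.1.1.2.2.2 ∧
    (x.2 ≠ y.2 → ∃ d, d ∉ x.1.1.2.2.1 ∧ (d = y.1.1.1 ∨ d ∈ y.1.1.2.2.2)) := by
  have step : ∀ {x y : Set.range (key T l) × Bool}, Edge T l x y →
      y.1.1.1 ∈ x.1.1.2.1 ∧ y.1.1.2.1 ⊆ x.1.1.2.1 ∧ x.1.1.2.2.1 ⊆ y.1.1.2.2.1 ∧
      x.1.1.1 ∈ y.1.1.2.2.2 ∧ x.1.1.2.2.2 ⊆ y.1.1.2.2.2 := by
    rintro x y ⟨⟨a, b, ha, hb, hab⟩, -⟩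
    rw [← ha, ← hb]
    refine ⟨⟨b, hab, rfl⟩, ?_, ?_, ⟨a, hab, rfl⟩, ?_⟩
    · rintro _ ⟨c, hc, rfl⟩; exact ⟨c, hT hab hc, rfl⟩
    · rintro _ ⟨c, hc, rfl⟩; exact ⟨c, fun h => hc (hT hab h), rfl⟩
    · rintro _ ⟨c, hc, rfl⟩; exact ⟨c, hT hc hab, rfl⟩
  induction h with
  | single h =>
    obtain ⟨h1, h2, h3, h4, -⟩ := step h
    exact ⟨h1, h2, h3, h4, fun hne => ⟨_, h.2.resolve_left hne, Or.inl rfl⟩⟩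
  | @tail y z _ h ih =>
    obtain ⟨h1, h2, h3, h4, h5⟩ := step h
    obtain ⟨i1, i2, i3, i4, i5⟩ := ih
    refine ⟨i2 h1, h2.trans i2, i3.trans h3, h5 i4, fun hne => ?_⟩
    by_cases hxy : x.2 = y.2
    · have := h.2.resolve_left (fun e => hne (hxy.trans e))
      exact ⟨_, fun hh => this (i3 hh), Or.inl rfl⟩
    · obtain ⟨d, hd, hd'⟩ := i5 hxy
      refine ⟨d, hd, Or.inr ?_⟩
      rcases hd' with rfl | hd'
      · exact h4
      · exact h5 hd'

theorem core (hT : Transitive T) :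
    ∃ (S : Set.range (key T l) × Bool → Set.range (key T l) × Bool → Prop)
      (p : Set.range (key T l) × Bool → A), Transitive S ∧
      (∀ a, ∃ x, l (p x) = l a) ∧
      (∀ x y, ∃ b, (T (p x) b ↔ S x y) ∧ l b = l (p y)) ∧
      (∀ x b, ∃ y, (T (p x) b ↔ S x y) ∧ l b = l (p y)) := by
  let p : Set.range (key T l) × Bool → A := fun x => x.1.2.choose
  have hp : ∀ x, key T l (p x) = x.1.1 := fun x => x.1.2.choose_spec
  have hl : ∀ x, l (p x) = x.1.1.1 := fun x => congrArg (fun z => z.1) (hp x)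
  have hP : ∀ x, Pos T l (p x) = x.1.1.2.1 := fun x => congrArg (fun z => z.2.1) (hp x)
  have hN : ∀ x, Neg T l (p x) = x.1.1.2.2.1 := fun x => congrArg (fun z => z.2.2.1) (hp x)
  let q : A → Bool → Set.range (key T l) × Bool := fun a i => (⟨key T l a, a, rfl⟩, i)
  refine ⟨Relation.TransGen (Edge T l), p, fun _ _ _ => Relation.TransGen.trans, ?_, ?_, ?_⟩
  · intro a; exact ⟨q a true, hl _⟩
  · intro x y
    by_cases h : Relation.TransGen (Edge T l) x y
    · have := (core_mono T l hT h).1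
      rw [← hP] at this
      obtain ⟨b, hb, hb'⟩ := this
      exact ⟨b, by simp [h, hb], by rw [hb', hl]⟩
    · have : y.1.1.1 ∈ x.1.1.2.2.1 := by
        by_contra hc
        apply h
        refine Relation.TransGen.single ⟨⟨p x, p y, hp x, hp y, ?_⟩, Or.inr hc⟩
        by_contra hn
        rw [← hN] at hc
        exact hc ⟨p y, hn, hl y⟩
      rw [← hN] at this
      obtain ⟨b, hb, hb'⟩ := this
      exact ⟨b, by simp [h, hb], by rw [hb', hl]⟩
  · intro x b
    by_cases h : T (p x) b
    · refine ⟨q b x.2, ?_, (hl (q b x.2)).symm⟩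
      simp only [h, true_iff]
      exact Relation.TransGen.single ⟨⟨p x, b, hp x, rfl, h⟩, Or.inl rfl⟩
    · refine ⟨q b (!x.2), ?_, (hl (q b (!x.2))).symm⟩
      simp only [h, false_iff]
      intro hS
      obtain ⟨-, -, -, -, h5⟩ := core_mono T l hT hS
      obtain ⟨d, hd, hd'⟩ := h5 (by simp [q])
      rw [← hN] at hd
      have hsee : ∀ c, l c = d → T (p x) c := fun c hc => by
        by_contra hn; exact hd ⟨c, hn, hc⟩
      rcases hd' with rfl | ⟨c, hc, hc'⟩
      · exact h (hsee b rfl)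
      · exact h (hT (hsee c hc') hc)

end core

/-! ### The cloned model -/

section clone
theorem tail_snoc {X : Type} {k : ℕ} (v : Fin (k + 1) → X) (y : X) :
    Fin.tail (Fin.snoc v y : Fin (k + 2) → X) = Fin.snoc (Fin.tail v) y := by
  funext i
  refine Fin.lastCases ?_ (fun j => ?_) i
  · rw [Fin.snoc_last, Fin.tail, Fin.succ_last]
    exact Fin.snoc_last (α := fun _ => X) y v
  · rw [Fin.snoc_castSucc, Fin.tail, Fin.succ_castSucc]
    exact Fin.snoc_castSucc (α := fun _ => X) y v j.succ

open Classical in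
noncomputable def pick {A X : Type} [Nonempty A] (S : A → Prop) (f : A → X) (c : X) : A :=
  if h : ∃ b, S b ∧ f b = c then h.choose
  else if h : ∃ b, S b then h.choose else Classical.arbitrary A

theorem pick_mem {A X : Type} [Nonempty A] {S : A → Prop} (f : A → X) (c : X) (h : ∃ b, S b) :
    S (pick S f c) := by
  unfold pick
  split_ifs with h1
  · exact h1.choose_spec.1
  · exact h.choose_spec

theorem pick_eq {A X : Type} [Nonempty A] {S : A → Prop} (f : A → X) (b : A) (h : S b) :
    f (pick S f (f b)) = f b := by
  have h1 : ∃ b', S b' ∧ f b' = f b := ⟨b, h, rfl⟩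
  unfold pick
  rw [dif_pos h1]
  exact h1.choose_spec.2

variable {n : ℕ} {ar : Fin n → ℕ} {A B : Type} (M : Str n ar A) (m : ℕ) (hm : 2 ≤ m)
  (S : B → B → Prop) (p : B → A)

abbrev Cl (n m : ℕ) (B : Type) := B × (∀ r : Fin m, Ty n r.val)

def Good (m : ℕ) {k : ℕ} (s : Prop) (u w : Fin (k + 1) → A) (b : A) : Prop :=
  ty M (m - (k + 2)) (Fin.tail (Fin.snoc u b : Fin (k + 2) → A)) = ty M (m - (k + 2)) w ∧
  (k = 0 → (M.T (u 0) b ↔ s))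

noncomputable def g [Nonempty A] : ∀ k : ℕ, (Fin k → Cl n m B) → Fin k → A
  | 0, _ => fun i => i.elim0
  | 1, v => fun _ => p (v 0).1
  | k + 2, v => Fin.snoc (g (k + 1) (Fin.init v))
      (pick (Good M m (S (v 0).1 (v (Fin.last _)).1) (g (k + 1) (Fin.init v))
          (g (k + 1) (Fin.tail v)))
        (fun b => ty M (m - (k + 2)) (Fin.snoc (g (k + 1) (Fin.init v)) b : Fin (k + 2) → A))
        ((v (Fin.last _)).2 ⟨m - (k + 2), by omega⟩))

variable [Nonempty A]

theorem g_indep : ∀ (k : ℕ), k + 1 ≤ m → ∀ (v : Fin k → Cl n m B) (y y' : Cl n m B), y.1 = y'.1 →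
    (∀ r : Fin m, m - (k + 1) ≤ r.val → y.2 r = y'.2 r) →
    g M m hm S p (k + 1) (Fin.snoc v y) = g M m hm S p (k + 1) (Fin.snoc v y')
  | 0, _, v, y, y', h1, _ => by
    simp [g, Fin.snoc, h1]
  | k + 1, hk, v, y, y', h1, h2 => by
    have ih := g_indep k (by omega) (Fin.tail v) y y' h1 (fun r hr => h2 r (by omega))
    have h3 := h2 ⟨m - (k + 2), by omega⟩ le_rfl
    have t1 : ∀ y : Cl n m B, Fin.tail (Fin.snoc v y : Fin (k + 2) → Cl n m B) =
      Fin.snoc (Fin.tail v) y := fun y => tail_snoc v y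
    have t2 : ∀ y : Cl n m B, (Fin.snoc v y : Fin (k + 2) → Cl n m B) 0 = v 0 := fun y => by
      exact Fin.snoc_castSucc (α := fun _ => Cl n m B) y v 0
    simp only [g, Fin.init_snoc, t1, t2, Fin.snoc_last, ih, h1, h3]


theorem succ_of_ty' {r' r k : ℕ} (hr : r' = r + 1) {u w : Fin k → A}
    (h : ty M r' u = ty M r' w) (b : A) :
    ∃ c, ty M r (Fin.snoc w c : Fin (k + 1) → A) = ty M r (Fin.snoc u b : Fin (k + 1) → A) := by
  subst hr; exact succ_of_ty M h b

theorem drop_ty' {r' r k : ℕ} (hr : r' = r + 1) {u w : Fin k → A}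
    (h : ty M r' u = ty M r' w) : ty M r u = ty M r w := by
  subst hr; exact drop_ty M r h

def lab (m : ℕ) (a : A) : Ty n (m - 1) := ty M (m - 1) (fun _ : Fin 1 => a)

theorem g_spec (k : ℕ) (v : Fin (k + 2) → Cl n m B)
    (h : ∃ b, Good M m (S (v 0).1 (v (Fin.last _)).1) (g M m hm S p (k + 1) (Fin.init v))
      (g M m hm S p (k + 1) (Fin.tail v)) b) :
    ∃ b, g M m hm S p (k + 2) v = Fin.snoc (g M m hm S p (k + 1) (Fin.init v)) b ∧
      Good M m (S (v 0).1 (v (Fin.last _)).1) (g M m hm S p (k + 1) (Fin.init v))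
      (g M m hm S p (k + 1) (Fin.tail v)) b :=
  ⟨_, by rw [g], pick_mem _ _ h⟩

theorem good_exists
    (h2 : ∀ x y, ∃ b, (M.T (p x) b ↔ S x y) ∧ lab M m b = lab M m (p y)) :
    ∀ k, k + 2 ≤ m → ∀ v : Fin (k + 2) → Cl n m B,
    ∃ b, Good M m (S (v 0).1 (v (Fin.last _)).1) (g M m hm S p (k + 1) (Fin.init v))
      (g M m hm S p (k + 1) (Fin.tail v)) b
  | 0, hk, v => by
    obtain ⟨b, hb, hb'⟩ := h2 (v 0).1 (v (Fin.last _)).1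
    refine ⟨b, ?_, fun _ => hb⟩
    have e : Fin.tail (Fin.snoc (g M m hm S p (0 + 1) (Fin.init v)) b : Fin 2 → A)
        = fun _ : Fin 1 => b := by
      funext i
      obtain rfl : i = 0 := Fin.eq_zero i
      exact Fin.snoc_last (α := fun _ => A) b (g M m hm S p (0 + 1) (Fin.init v))
    rw [e]
    exact drop_ty' M (by omega) hb'
  | k + 1, hk, v => by
    have ih := good_exists h2 k (by omega)
    obtain ⟨c, hc, hgc⟩ := g_spec M m hm S p k (Fin.init v) (ih _)
    obtain ⟨d, hd, hgd⟩ := g_spec M m hm S p k (Fin.tail v) (ih _)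
    have h3 := hgc.1
    rw [← hc] at h3
    rw [← Fin.tail_init_eq_init_tail] at hd
    obtain ⟨b, hb⟩ := succ_of_ty' M (r := m - (k + 3)) (by omega) h3.symm d
    refine ⟨b, ?_, fun h => by omega⟩
    rw [tail_snoc, hb, hd]

theorem g_tail
    (h2 : ∀ x y, ∃ b, (M.T (p x) b ↔ S x y) ∧ lab M m b = lab M m (p y))
    (k : ℕ) (hk : k + 1 ≤ m) (v : Fin (k + 1) → Cl n m B) :
    ty M (m - (k + 1)) (Fin.tail (g M m hm S p (k + 1) v)) =
      ty M (m - (k + 1)) (g M m hm S p k (Fin.tail v)) := by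
  cases k with
  | zero => congr 1; funext i; exact i.elim0
  | succ k =>
    obtain ⟨c, hc, hgc⟩ := g_spec M m hm S p k v (good_exists M m hm S p h2 k hk v)
    rw [hc]; exact hgc.1

theorem g_forth
    (h2 : ∀ x y, ∃ b, (M.T (p x) b ↔ S x y) ∧ lab M m b = lab M m (p y))
    (k : ℕ) (hk : k + 1 ≤ m) (v : Fin k → Cl n m B) (y : Cl n m B) :
    ∃ b, g M m hm S p (k + 1) (Fin.snoc v y) = Fin.snoc (g M m hm S p k v) b := by
  cases k with
  | zero =>
    refine ⟨p y.1, ?_⟩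
    funext i
    obtain rfl : i = 0 := Fin.eq_zero i
    simp [g, Fin.snoc]
  | succ k =>
    obtain ⟨c, hc, -⟩ := g_spec M m hm S p k (Fin.snoc v y) (good_exists M m hm S p h2 k hk _)
    rw [Fin.init_snoc] at hc
    exact ⟨c, hc⟩

theorem g_adjust (k : ℕ) (hk : k + 2 ≤ m) (v : Fin (k + 1) → Cl n m B) (y : Cl n m B) (b : A)
    (hb : Good M m (S (v 0).1 y.1) (g M m hm S p (k + 1) v)
      (g M m hm S p (k + 1) (Fin.snoc (Fin.tail v) y)) b) :
    ∃ y' : Cl n m B, ty M (m - (k + 2)) (g M m hm S p (k + 2) (Fin.snoc v y')) =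
      ty M (m - (k + 2)) (Fin.snoc (g M m hm S p (k + 1) v) b : Fin (k + 2) → A) := by
  classical
  let y' : Cl n m B := (y.1, Function.update y.2 ⟨m - (k + 2), by omega⟩
    (ty M (m - (k + 2)) (Fin.snoc (g M m hm S p (k + 1) v) b : Fin (k + 2) → A)))
  refine ⟨y', ?_⟩
  have ind : g M m hm S p (k + 1) (Fin.snoc (Fin.tail v) y) =
      g M m hm S p (k + 1) (Fin.snoc (Fin.tail v) y') := by
    refine g_indep M m hm S p k (by omega) _ _ _ rfl ?_
    intro r hr
    refine (Function.update_of_ne ?_ _ _).symm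
    rintro rfl
    simp only at hr
    omega
  have t2 : (Fin.snoc v y' : Fin (k + 2) → Cl n m B) 0 = v 0 :=
    Fin.snoc_castSucc (α := fun _ => Cl n m B) y' v 0
  have h3 : y'.2 ⟨m - (k + 2), by omega⟩ =
    ty M (m - (k + 2)) (Fin.snoc (g M m hm S p (k + 1) v) b : Fin (k + 2) → A) :=
    Function.update_self ..
  rw [ind] at hb
  rw [g]
  simp only [Fin.init_snoc, tail_snoc, t2, Fin.snoc_last, h3]
  exact pick_eq (fun b => ty M (m - (k + 2))
    (Fin.snoc (g M m hm S p (k + 1) v) b : Fin (k + 2) → A)) b hb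

theorem g_back
    (h1 : ∀ a, ∃ x, lab M m (p x) = lab M m a)
    (h2 : ∀ x y, ∃ b, (M.T (p x) b ↔ S x y) ∧ lab M m b = lab M m (p y))
    (h3 : ∀ x b, ∃ y, (M.T (p x) b ↔ S x y) ∧ lab M m b = lab M m (p y)) :
    ∀ (k : ℕ) (_ : k + 1 ≤ m) (v : Fin k → Cl n m B) (b : A),
    ∃ y, ty M (m - (k + 1)) (g M m hm S p (k + 1) (Fin.snoc v y)) =
      ty M (m - (k + 1)) (Fin.snoc (g M m hm S p k v) b : Fin (k + 1) → A)
  | 0, hk, v, b => by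
    obtain ⟨x, hx⟩ := h1 b
    refine ⟨(x, fun r => ty M r.val (fun _ : Fin 1 => b)), ?_⟩
    have e : (Fin.snoc (g M m hm S p 0 v) b : Fin 1 → A) = fun _ => b := by
      funext i; obtain rfl : i = 0 := Fin.eq_zero i; simp [Fin.snoc]
    have e2 : ∀ y : Cl n m B, g M m hm S p 1 (Fin.snoc v y) = fun _ => p y.1 := by
      intro y; funext i; simp [g, Fin.snoc]
    rw [e]
    exact (congrArg (ty M (m - 1)) (e2 _)).trans hx
  | 1, hk, v, b => by
    obtain ⟨x, hx, hx'⟩ := h3 (v 0).1 b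
    refine g_adjust M m hm S p 0 hk v (x, fun r => ty M r.val (fun _ : Fin 1 => b)) b ⟨?_, ?_⟩
    · have e : Fin.tail (Fin.snoc (g M m hm S p (0 + 1) v) b : Fin 2 → A)
          = fun _ : Fin 1 => b := by
        funext i
        obtain rfl : i = 0 := Fin.eq_zero i
        exact Fin.snoc_last (α := fun _ => A) b (g M m hm S p (0 + 1) v)
      have e2 : ∀ (v : Fin 0 → Cl n m B) (y : Cl n m B),
          g M m hm S p (0 + 1) (Fin.snoc v y) = fun _ => p y.1 := by
        intro v y; funext i; simp [g, Fin.snoc]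
      rw [e, e2]
      exact drop_ty' M (by omega) hx'
    · intro _; exact hx
  | k + 2, hk, v, b => by
    have ht := g_tail M m hm S p h2 (k + 1) (by omega) v
    obtain ⟨c, hc⟩ := succ_of_ty' M (r := m - (k + 3)) (by omega) ht b
    obtain ⟨y, hy⟩ := g_back h1 h2 h3 (k + 1) (by omega) (Fin.tail v) c
    refine g_adjust M m hm S p (k + 1) hk v y b ⟨?_, fun h => by omega⟩
    rw [tail_snoc]
    exact hc.symm.trans (drop_ty' M (by omega) hy).symm

noncomputable def newStr : Str n ar (Cl n m B) where
  R i v := M.R i (g M m hm S p (ar i) v)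
  T x y := S x.1 y.1

theorem atom_tail {X : Type} (N : Str n ar X) {k : ℕ} (i : Fin n) (h : ar i ≤ k) (h' : ar i ≤ k + 1)
    (v : Fin (k + 1) → X) :
    FAtom.Sat N (.pred i h') v ↔ FAtom.Sat N (.pred i h) (Fin.tail v) := by
  simp only [FAtom.Sat, Fin.tail, Fin.succ_mk]
  have : (fun j : Fin (ar i) => v ⟨k + 1 - ar i + j.val, by omega⟩) =
    fun j : Fin (ar i) => v ⟨k - ar i + j.val + 1, by omega⟩ := by
    funext j; congr 2; omega
  rw [this]

theorem tat_tail {X : Type} (N : Str n ar X) {k : ℕ} (h : 2 ≤ k) (h' : 2 ≤ k + 1)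
    (v : Fin (k + 1) → X) :
    FAtom.Sat N (.tat h') v ↔ FAtom.Sat N (.tat h) (Fin.tail v) := by
  simp only [FAtom.Sat, Fin.tail, Fin.succ_mk]
  have e1 : (⟨k + 1 - 2, by omega⟩ : Fin (k + 1)) = ⟨k - 2 + 1, by omega⟩ := by
    congr 1; omega
  have e2 : (⟨k + 1 - 1, by omega⟩ : Fin (k + 1)) = ⟨k - 1 + 1, by omega⟩ := by
    congr 1; omega
  rw [e1, e2]

theorem atom_iff
    (h2 : ∀ x y, ∃ b, (M.T (p x) b ↔ S x y) ∧ lab M m b = lab M m (p y)) :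
    ∀ (k : ℕ) (_ : k ≤ m) (a : FAtom n ar k) (v : Fin k → Cl n m B),
    FAtom.Sat (newStr M m hm S p) a v ↔ FAtom.Sat M a (g M m hm S p k v) := by
  have base : ∀ (k : ℕ) (i : Fin n) (h : ar i ≤ k) (_ : ar i = k) (v : Fin k → Cl n m B),
      FAtom.Sat (newStr M m hm S p) (.pred i h) v ↔
        FAtom.Sat M (.pred i h) (g M m hm S p k v) := by
    rintro _ i h rfl v
    simp [FAtom.Sat, newStr]
  intro k
  induction k with
  | zero =>
    intro _ a v
    cases a with
    | pred i h => exact base 0 i h (by omega) v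
    | tat h => omega
  | succ k ih =>
    intro hk a v
    have ht := atoms_of_ty M (g_tail M m hm S p h2 k hk v)
    cases a with
    | pred i h =>
      rcases Nat.lt_or_ge k (ar i) with h' | h'
      · exact base _ i h (by omega) v
      · rw [atom_tail _ i h' h, atom_tail _ i h' h, ih (by omega)]
        exact (sat_of_atoms M ht _).symm
    | tat h =>
      rcases Nat.lt_or_ge k 2 with h' | h'
      · obtain rfl : k = 1 := by omega
        obtain ⟨c, hc, hgc⟩ := g_spec M m hm S p 0 v (good_exists M m hm S p h2 0 hk v)
        have := hgc.2 rfl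
        simp only [FAtom.Sat]
        rw [hc]
        exact this.symm
      · rw [tat_tail _ h' h, tat_tail _ h' h, ih (by omega)]
        exact (sat_of_atoms M ht _).symm

theorem sat_iff
    (h1 : ∀ a, ∃ x, lab M m (p x) = lab M m a)
    (h2 : ∀ x y, ∃ b, (M.T (p x) b ↔ S x y) ∧ lab M m b = lab M m (p y))
    (h3 : ∀ x b, ∃ y, (M.T (p x) b ↔ S x y) ∧ lab M m b = lab M m (p y))
    {k : ℕ} (φ : FL n ar k) : FL.depth φ ≤ m → ∀ (v : Fin k → Cl n m B),
    (FL.Sat (newStr M m hm S p) φ v ↔ FL.Sat M φ (g M m hm S p k v)) := by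
  induction φ with
  | atom a => intro hd v; exact atom_iff M m hm S p h2 _ hd a v
  | fls => intro hd v; exact Iff.rfl
  | not φ ih => intro hd v; exact not_congr (ih hd v)
  | and φ ψ ih1 ih2 =>
    intro hd v
    exact and_congr (ih1 ((le_max_left _ _).trans hd) v) (ih2 ((le_max_right _ _).trans hd) v)
  | or φ ψ ih1 ih2 =>
    intro hd v
    exact or_congr (ih1 ((le_max_left _ _).trans hd) v) (ih2 ((le_max_right _ _).trans hd) v)
  | @ex k φ ih =>
    intro hd v
    have hk : k + 1 ≤ FL.depth φ := le_depth φ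
    simp only [FL.depth] at hd
    simp only [FL.Sat, ih hd]
    constructor
    · rintro ⟨y, hy⟩
      obtain ⟨b, hb⟩ := g_forth M m hm S p h2 k (by omega) v y
      exact ⟨b, hb ▸ hy⟩
    · rintro ⟨b, hb⟩
      obtain ⟨y, hy⟩ := g_back M m hm S p h1 h2 h3 k (by omega) v b
      exact ⟨y, (sat_of_ty M φ _ (by omega) hy).2 hb⟩
  | @all k φ ih =>
    intro hd v
    have hk : k + 1 ≤ FL.depth φ := le_depth φ
    simp only [FL.depth] at hd
    simp only [FL.Sat, ih hd]
    constructor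
    · intro H b
      obtain ⟨y, hy⟩ := g_back M m hm S p h1 h2 h3 k (by omega) v b
      exact (sat_of_ty M φ _ (by omega) hy).1 (H y)
    · intro H y
      obtain ⟨b, hb⟩ := g_forth M m hm S p h2 k (by omega) v y
      exact hb ▸ H b

end clone

/-! ### Counting -/

theorem tower_mono (k : ℕ) {x y : ℕ} (h : x ≤ y) : tower k x ≤ tower k y := by
  induction k with
  | zero => exact h
  | succ k ih => exact Nat.pow_le_pow_right (by norm_num) ih

theorem tower_pos (k : ℕ) {x : ℕ} (h : 1 ≤ x) : 1 ≤ tower k x := by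
  cases k with
  | zero => exact h
  | succ k => exact Nat.one_le_two_pow

theorem tower_le_succ (k x : ℕ) : tower k x ≤ tower (k + 1) x := by
  exact Nat.lt_two_pow_self.le

theorem tower_add (k x y : ℕ) : tower k y + x ≤ tower k (y + x) := by
  induction k with
  | zero => exact le_rfl
  | succ k ih =>
    have h1 : 2 ^ (tower k y + x) ≤ 2 ^ tower k (y + x) := Nat.pow_le_pow_right (by norm_num) ih
    have h2 : x < 2 ^ x := Nat.lt_two_pow_self
    have h3 : 1 ≤ 2 ^ tower k y := Nat.one_le_two_pow
    simp only [tower]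
    rw [pow_add] at h1
    nlinarith

theorem tower_mul (k d y : ℕ) (hd : 1 ≤ d) (hy : 1 ≤ y) : d * tower k y ≤ tower k (d * y) := by
  induction k with
  | zero => exact le_rfl
  | succ k ih =>
    have hs := tower_pos k hy
    obtain ⟨e, rfl⟩ : ∃ e, d = e + 1 := ⟨d - 1, by omega⟩
    simp only [tower]
    calc (e + 1) * 2 ^ tower k y ≤ 2 ^ e * 2 ^ tower k y :=
          Nat.mul_le_mul_right _ (Nat.lt_two_pow_self (n := e))
      _ = 2 ^ (e + tower k y) := by rw [pow_add]
      _ ≤ 2 ^ ((e + 1) * tower k y) := Nat.pow_le_pow_right (by norm_num) (by nlinarith)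
      _ ≤ _ := Nat.pow_le_pow_right (by norm_num) ih

theorem card_set (X : Type) [Finite X] : Nat.card (Set X) = 2 ^ Nat.card X := by
  have := Fintype.ofFinite X
  rw [Nat.card_eq_fintype_card, Fintype.card_set, Nat.card_eq_fintype_card]

theorem card_opt (n : ℕ) : Nat.card (Set (Option (Fin n))) = 2 ^ (n + 1) := by
  rw [card_set]; simp

theorem card_Ty (n r : ℕ) : Nat.card (Ty n r) ≤ tower (r + 1) ((r + 1) * (n + 1)) := by
  induction r with
  | zero =>
    have : Nat.card (Ty n 0) = 2 ^ (n + 1) := card_opt n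
    rw [this]; simp [tower]
  | succ r ih =>
    have : Nat.card (Ty n (r + 1)) = 2 ^ (n + 1) * 2 ^ Nat.card (Ty n r) := by
      rw [← card_opt, ← card_set, ← Nat.card_prod]; rfl
    rw [this, ← pow_add]
    refine Nat.pow_le_pow_right (by norm_num) ?_
    have h1 := tower_add (r + 1) (n + 1) ((r + 1) * (n + 1))
    have h2 : (r + 1) * (n + 1) + (n + 1) = (r + 1 + 1) * (n + 1) := by ring
    rw [h2] at h1
    omega

theorem tower_le_of_le {j k : ℕ} (h : j ≤ k) (x : ℕ) : tower j x ≤ tower k x := by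
  induction h with
  | refl => exact le_rfl
  | step _ ih => exact ih.trans (tower_le_succ _ _)

theorem bounded (m : ℕ) (hm : 2 ≤ m) (n : ℕ) (ar : Fin n → ℕ) (φ : FL n ar 0)
    (hd : FL.depth φ ≤ m) (hs : SatisfiableT φ) :
    ∃ (A : Type) (_ : Nonempty A) (_ : Fintype A) (M : Str n ar A),
      Transitive M.T ∧ SatSent M φ ∧
      Fintype.card A ≤ tower (m + 1) (((m + 5) * m) * (n + FL.size φ + 1)) := by
  obtain ⟨A, hA, M, hT, hM⟩ := hs
  obtain ⟨S, p, hS, h1, h2, h3⟩ := core M.T (lab M m) hT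
  let B := Set.range (key M.T (lab M m)) × Bool
  have hB : Nonempty B := ⟨(⟨_, Classical.arbitrary A, rfl⟩, true)⟩
  have hty : ∀ r, Nonempty (Ty n r) := fun r => ⟨ty M r (fun _ : Fin 1 => Classical.arbitrary A)⟩
  have hfin : Finite B := by infer_instance
  let _ : Fintype (Cl n m B) := Fintype.ofFinite _
  refine ⟨Cl n m B, inferInstance, inferInstance, newStr M m hm S p, ?_, ?_, ?_⟩
  · intro x y z hxy hyz; exact hS hxy hyz
  · refine (sat_iff M m hm S p h1 h2 h3 φ hd _).2 ?_
    unfold SatSent at hM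
    convert hM
  · rw [← Nat.card_eq_fintype_card]
    set W := tower m (m * (n + 1)) with hW
    have hW1 : 1 ≤ W := tower_pos _ (by nlinarith)
    have hTy : ∀ r, r < m → Nat.card (Ty n r) ≤ W := fun r hr =>
      (card_Ty n r).trans ((tower_le_of_le hr _).trans
        (tower_mono _ (Nat.mul_le_mul_right _ hr)))
    have hK := hTy (m - 1) (by omega)
    have c1 : Nat.card B ≤ (W * (2 ^ W * (2 ^ W * 2 ^ W))) * 2 := by
      have e : Nat.card (Set.range (key M.T (lab M m))) ≤
          Nat.card (Ty n (m - 1) × Set (Ty n (m - 1)) × Set (Ty n (m - 1)) × Set (Ty n (m - 1))) :=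
        Nat.card_le_card_of_injective Subtype.val Subtype.val_injective
      rw [Nat.card_prod, Nat.card_prod, Nat.card_prod, card_set] at e
      have hp : 2 ^ Nat.card (Ty n (m - 1)) ≤ 2 ^ W := Nat.pow_le_pow_right (by norm_num) hK
      have : Nat.card B = Nat.card (Set.range (key M.T (lab M m))) * 2 := by
        simp only [B]; rw [Nat.card_prod]; simp
      rw [this]
      refine Nat.mul_le_mul_right _ (e.trans ?_)
      gcongr
    have c2 : Nat.card (∀ r : Fin m, Ty n r.val) ≤ W ^ m := by
      rw [Nat.card_pi]
      calc _ ≤ ∏ _r : Fin m, W := Finset.prod_le_prod' (fun r _ => hTy r.val r.isLt)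
        _ = _ := by simp
    have c3 : W ≤ 2 ^ W := Nat.lt_two_pow_self.le
    calc Nat.card (Cl n m B) = Nat.card B * Nat.card (∀ r : Fin m, Ty n r.val) := Nat.card_prod _ _
      _ ≤ ((W * (2 ^ W * (2 ^ W * 2 ^ W))) * 2) * W ^ m := Nat.mul_le_mul c1 c2
      _ ≤ ((2 ^ W * (2 ^ W * (2 ^ W * 2 ^ W))) * 2 ^ W) * (2 ^ W) ^ m := by
        gcongr
        calc 2 = 2 ^ 1 := by norm_num
          _ ≤ 2 ^ W := Nat.pow_le_pow_right (by norm_num) hW1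
      _ = 2 ^ ((m + 5) * W) := by
            rw [← pow_mul, ← pow_add, ← pow_add, ← pow_add, ← pow_add,
              ← pow_add]; congr 1; ring
      _ ≤ tower (m + 1) (((m + 5) * m) * (n + FL.size φ + 1)) := by
        refine Nat.pow_le_pow_right (by norm_num) ?_
        refine (tower_mul m (m + 5) (m * (n + 1)) (by omega) (by nlinarith)).trans ?_
        refine tower_mono _ ?_
        rw [← mul_assoc]
        exact Nat.mul_le_mul_left _ (by omega)

/-- Theorem 6.  For every `m ≥ 2`, a satisfiable `FL^m1T`-formula
has a model of size at most `(m+1)`-tuply exponential in its size (the size of a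
formula over the signature `(n, ar)` being measured by `n + FL.size φ`); hence the
satisfiability problem for `FL^m1T` is in nondeterministic `(m+1)`-tuply exponential
time.  In particular, every satisfiable sentence of the fluted fragment with one
transitive relation, FL1T, has a finite model (with `t` transitive): FL1T has the
finite model property. -/
theorem flutedOneTrans_model_property :
    (∀ m : ℕ, 2 ≤ m → ∃ c : ℕ,
      ∀ (n : ℕ) (ar : Fin n → ℕ) (φ : FL n ar 0), FL.depth φ ≤ m →
        SatisfiableT φ →
        ∃ (A : Type) (_ : Nonempty A) (_ : Fintype A) (M : Str n ar A),
          Transitive M.T ∧ SatSent M φ ∧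
          Fintype.card A ≤ tower (m + 1) (c * (n + FL.size φ + 1))) ∧
    (∀ (n : ℕ) (ar : Fin n → ℕ) (φ : FL n ar 0), SatisfiableT φ →
      ∃ (A : Type) (_ : Nonempty A) (_ : Fintype A) (M : Str n ar A),
        Transitive M.T ∧ SatSent M φ) := by
  refine ⟨fun m hm => ⟨(m + 5) * m, fun n ar φ hd hs => bounded m hm n ar φ hd hs⟩, ?_⟩
  intro n ar φ hs
  obtain ⟨A, h1, h2, M, h3, h4, -⟩ := bounded (max 2 (FL.depth φ)) (le_max_left _ _) n ar φ
    (le_max_right _ _) hs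
  exact ⟨A, h1, h2, M, h3, h4⟩

end FlutedOneTrans
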